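/- arXiv:2202.05990 — 2 statements merged into one kernel-verified Lean document; each statement's English description precedes it below -/
import Mathlib

section
/- Neighbor constraints on anchored corenesses (Theorem 4.3): let G be a finite directed graph, v a vertex, and k a natural number with k ≤ k_max(v), and write l = l_max(v,k). If l > 0, then (i) v has at least k in-neighbors v' in G with k ≤ k_max(v') and l_max(v',k) ≥ l, and (ii) v has at least l out-neighbors v'' in G with k ≤ k_max(v'') and l_max(v'',k) ≥ l. -/
open Finset

variable {V : Type*} [Fintype V] [DecidableEq V]

/-- The in-neighbors of `v` within `S`: vertices `u ∈ S` with an edge `u → v`. -/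
def inN (E : V → V → Prop) [DecidableRel E] (S : Finset V) (v : V) : Finset V :=
  S.filter (fun u => E u v)

/-- The out-neighbors of `v` within `S`: vertices `u ∈ S` with an edge `v → u`. -/
def outN (E : V → V → Prop) [DecidableRel E] (S : Finset V) (v : V) : Finset V :=
  S.filter (fun u => E v u)

/-- `S` satisfies the `(k,l)`-degree constraints: every `v ∈ S` has at least `k`
in-neighbors in `S` and at least `l` out-neighbors in `S`. -/
def satisfiesKL (E : V → V → Prop) [DecidableRel E] (k l : ℕ) (S : Finset V) : Prop :=
  ∀ v ∈ S, k ≤ (inN E S v).card ∧ l ≤ (outN E S v).card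

instance (E : V → V → Prop) [DecidableRel E] (k l : ℕ) (S : Finset V) :
    Decidable (satisfiesKL E k l S) := by unfold satisfiesKL; infer_instance

/-- The `(k,l)`-core of the graph: the union of all vertex subsets satisfying the
`(k,l)`-degree constraints. -/
def core (E : V → V → Prop) [DecidableRel E] (k l : ℕ) : Finset V :=
  (Finset.univ.powerset.filter (satisfiesKL E k l)).sup id

/-- `kmax E v`: the largest `k` such that `v` belongs to the `(k,0)`-core. -/
noncomputable def kmax (E : V → V → Prop) [DecidableRel E] (v : V) : ℕ :=
  sSup {k : ℕ | v ∈ core E k 0}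

/-- `lmax E v k`: the largest `l` such that `v` belongs to the `(k,l)`-core. -/
noncomputable def lmax (E : V → V → Prop) [DecidableRel E] (v : V) (k : ℕ) : ℕ :=
  sSup {l : ℕ | v ∈ core E k l}

/-- The H-index of a finite multiset of naturals: the largest `h` such that at least
`h` elements (with multiplicity) are `≥ h`. -/
noncomputable def hIndex (M : Multiset ℕ) : ℕ :=
  sSup {h : ℕ | h ≤ (M.filter (fun x => h ≤ x)).card}

/-- The `n`-order in-H-index of a vertex `v` in the graph with vertex set `S`
and edge relation `E`. -/
noncomputable def iH (E : V → V → Prop) [DecidableRel E] (S : Finset V) : ℕ → V → ℕ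
  | 0 => fun v => (inN E S v).card
  | n + 1 => fun v => hIndex ((inN E S v).val.map (iH E S n))

/-- The `n`-order out-H-index of a vertex `v` in the graph with vertex set `S`
and edge relation `E`. -/
noncomputable def oH (E : V → V → Prop) [DecidableRel E] (S : Finset V) : ℕ → V → ℕ
  | 0 => fun v => (outN E S v).card
  | n + 1 => fun v => hIndex ((outN E S v).val.map (oH E S n))

/-- The eventual (limit) value of the in-H-index sequence. -/
noncomputable def iHlim (E : V → V → Prop) [DecidableRel E] (S : Finset V) (v : V) : ℕ :=
  ⨅ n, iH E S n v

/-- The eventual (limit) value of the out-H-index sequence. -/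
noncomputable def oHlim (E : V → V → Prop) [DecidableRel E] (S : Finset V) (v : V) : ℕ :=
  ⨅ n, oH E S n v

/-- `(k,l)` is a skyline coreness of `v`: `v` is in the `(k,l)`-core and there is no
pair `(k',l')` strictly dominating `(k,l)` with `v` in the `(k',l')`-core. -/
def skyline (E : V → V → Prop) [DecidableRel E] (v : V) (p : ℕ × ℕ) : Prop :=
  v ∈ core E p.1 p.2 ∧
    ¬ ∃ q : ℕ × ℕ, (p.1 ≤ q.1 ∧ p.2 ≤ q.2 ∧ p ≠ q) ∧ v ∈ core E q.1 q.2

theorem aux_mem_core (E : V → V → Prop) [DecidableRel E] (k l : ℕ) (v : V) :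
    v ∈ core E k l ↔ ∃ S : Finset V, satisfiesKL E k l S ∧ v ∈ S := by
  simp [core, Finset.mem_sup]

theorem aux_le_kmax (E : V → V → Prop) [DecidableRel E] (k : ℕ) (v : V)
    (h : v ∈ core E k 0) : k ≤ kmax E v := by
  refine le_csSup ⟨Fintype.card V, ?_⟩ h
  intro m hm
  obtain ⟨S, hS, hv⟩ := (aux_mem_core E m 0 v).1 hm
  exact (hS v hv).1.trans (Finset.card_le_univ _)

theorem aux_bdd (E : V → V → Prop) [DecidableRel E] (k : ℕ) (v : V) :
    BddAbove {l : ℕ | v ∈ core E k l} := by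
  refine ⟨Fintype.card V, ?_⟩
  intro m hm
  obtain ⟨S, hS, hv⟩ := (aux_mem_core E k m v).1 hm
  exact (hS v hv).2.trans (Finset.card_le_univ _)

/-- **Theorem 4.3: neighbor constraints on anchored corenesses.**
If `k ≤ kmax v` and `l = lmax v k > 0`, then `v` has at least `k` in-neighbors `v'`
with `k ≤ kmax v'` and `lmax v' k ≥ l`, and at least `l` out-neighbors `v''`
with `k ≤ kmax v''` and `lmax v'' k ≥ l`. -/
theorem anchored_coreness_neighbor_constraints (E : V → V → Prop) [DecidableRel E]
    (v : V) (k : ℕ) (hk : k ≤ kmax E v) (hl : 0 < lmax E v k) :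
    k ≤ Set.ncard {u : V | E u v ∧ k ≤ kmax E u ∧ lmax E v k ≤ lmax E u k} ∧
    lmax E v k ≤ Set.ncard {u : V | E v u ∧ k ≤ kmax E u ∧ lmax E v k ≤ lmax E u k} := by
  have hne : {l : ℕ | v ∈ core E k l}.Nonempty := by
    by_contra h
    rw [Set.not_nonempty_iff_eq_empty] at h
    simp [lmax, h] at hl
  have hmem : v ∈ core E k (lmax E v k) := Nat.sSup_mem hne (aux_bdd E k v)
  obtain ⟨S, hS, hv⟩ := (aux_mem_core E k _ v).1 hmem
  have key : ∀ u ∈ S, k ≤ kmax E u ∧ lmax E v k ≤ lmax E u k := by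
    intro u hu
    refine ⟨aux_le_kmax E k u ((aux_mem_core E k 0 u).2
      ⟨S, fun w hw => ⟨(hS w hw).1, Nat.zero_le _⟩, hu⟩), ?_⟩
    exact le_csSup (aux_bdd E k u) ((aux_mem_core E k _ u).2 ⟨S, hS, hu⟩)
  constructor
  · refine (hS v hv).1.trans ?_
    rw [← Set.ncard_coe_finset]
    refine Set.ncard_le_ncard ?_ (Set.toFinite _)
    intro u hu
    have hu' := Finset.mem_filter.1 (Finset.mem_coe.1 hu)
    exact ⟨hu'.2, key u hu'.1⟩
  · refine (hS v hv).2.trans ?_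
    rw [← Set.ncard_coe_finset]
    refine Set.ncard_le_ncard ?_ (Set.toFinite _)
    intro u hu
    have hu' := Finset.mem_filter.1 (Finset.mem_coe.1 hu)
    exact ⟨hu'.2, key u hu'.1⟩
end

section
/- Monotonicity of the out-H-index in the order: for every finite directed graph G, every vertex v, and every natural number n, it holds that oH_G^(n+1)(v) ≤ oH_G^(n)(v); hence the sequence n ↦ oH_G^(n)(v) is non-increasing and eventually constant. -/
open Finset

variable {V : Type*} [Fintype V] [DecidableEq V]

theorem hIndex_set_bdd (M : Multiset ℕ) :
    BddAbove {h : ℕ | h ≤ (M.filter (fun x => h ≤ x)).card} :=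
  ⟨M.card, fun _ hh => le_trans hh (Multiset.card_le_card (Multiset.filter_le _ _))⟩

theorem hIndex_le_card (M : Multiset ℕ) : hIndex M ≤ M.card :=
  csSup_le ⟨0, Nat.zero_le _⟩
    (fun _ hh => le_trans hh (Multiset.card_le_card (Multiset.filter_le _ _)))

theorem hIndex_map_mono {α : Type*} (s : Multiset α) (f g : α → ℕ) (h : ∀ a, f a ≤ g a) :
    hIndex (s.map f) ≤ hIndex (s.map g) := by
  refine csSup_le_csSup (hIndex_set_bdd _) ⟨0, Nat.zero_le _⟩ ?_
  intro k hk
  simp only [Set.mem_setOf_eq, Multiset.filter_map, Multiset.card_map] at hk ⊢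
  exact hk.trans (Multiset.card_le_card
    (Multiset.monotone_filter_right s (fun a ha => le_trans ha (h a))))

theorem oH_succ_le (E : V → V → Prop) [DecidableRel E] (S : Finset V) (n : ℕ) :
    ∀ v, oH E S (n + 1) v ≤ oH E S n v := by
  induction n with
  | zero =>
    intro v
    have := hIndex_le_card ((outN E S v).val.map (oH E S 0))
    rw [Multiset.card_map] at this
    exact this
  | succ n ih =>
    intro v
    exact hIndex_map_mono _ _ _ ih

/-- **Monotonicity of the out-H-index in the order.** The sequence
`n ↦ oH_G^(n)(v)` is non-increasing, hence eventually constant. -/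
theorem oH_antitone_and_eventually_const (E : V → V → Prop) [DecidableRel E] (v : V) :
    (∀ n : ℕ, oH E Finset.univ (n + 1) v ≤ oH E Finset.univ n v) ∧
    (∃ N : ℕ, ∀ n : ℕ, N ≤ n → oH E Finset.univ n v = oH E Finset.univ N v) := by
  refine ⟨fun n => oH_succ_le E _ n v, ?_⟩
  have hanti : Antitone (fun n => oH E Finset.univ n v) :=
    antitone_nat_of_succ_le (fun n => oH_succ_le E _ n v)
  obtain ⟨N, hN⟩ := WellFoundedGT.monotone_chain_condition
    (⟨fun n => OrderDual.toDual (oH E Finset.univ n v), fun a b hab => hanti hab⟩ : ℕ →o ℕᵒᵈ)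
  exact ⟨N, fun n hn => (hN n hn).symm⟩
end
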